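/- Let f : {−1,1}^n → {−1,1} be monotone (f(x) ≥ f(y) whenever x_i ≥ y_i for all i) and let A be a randomized decision-tree algorithm such that every decision tree in the support of A computes f exactly on every input, with revealment δ. Then Var(f) ≤ δ^{3/2} · n^{1/2}. In particular, a balanced monotone Boolean function computed exactly by a randomized algorithm requires δ ≥ Ω(n^{-1/3}). -/

import Mathlib

/-- A deterministic decision tree on `n` bits: a leaf outputs a Boolean value, an
internal node queries a bit and branches on its value. -/
inductive DTree (n : ℕ) : Type
  | leaf : Bool → DTree n
  | node : Fin n → DTree n → DTree n → DTree n

namespace DTree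

/-- The output of a decision tree on input `x`. -/
def eval {n : ℕ} : DTree n → (Fin n → Bool) → Bool
  | .leaf b, _ => b
  | .node i t0 t1, x => if x i then t1.eval x else t0.eval x

/-- Whether the decision tree reads bit `j` when run on input `x`. -/
def readsBit {n : ℕ} : DTree n → (Fin n → Bool) → Fin n → Bool
  | .leaf _, _, _ => false
  | .node i t0 t1, x, j =>
      (i == j) || (if x i then t1.readsBit x j else t0.readsBit x j)

end DTree

/-- A randomized decision-tree algorithm: a (finitely supported) probability
distribution over deterministic decision trees. -/
structure RandAlg (n : ℕ) where
  m : ℕ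
  tree : Fin m → DTree n
  w : Fin m → ℝ
  w_nonneg : ∀ r, 0 ≤ w r
  w_sum : ∑ r, w r = 1

/-- `readProb A i` is the probability δ_i that bit `i` is read, over a uniformly
random input and the internal randomness of the algorithm. -/
noncomputable def readProb {n : ℕ} (A : RandAlg n) (i : Fin n) : ℝ :=
  (∑ r, ∑ x : Fin n → Bool, if (A.tree r).readsBit x i then A.w r else 0) / 2 ^ n

/-- The probability that the algorithm's output differs from `f`, over a uniformly
random input and the internal randomness of the algorithm. -/
noncomputable def errProb {n : ℕ} (A : RandAlg n) (f : (Fin n → Bool) → Bool) : ℝ :=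
  (∑ r, ∑ x : Fin n → Bool, if (A.tree r).eval x ≠ f x then A.w r else 0) / 2 ^ n

/-- A Boolean function is balanced if it takes the value `true` on exactly half
of all inputs. -/
def balanced {n : ℕ} (f : (Fin n → Bool) → Bool) : Prop :=
  2 * Nat.card {x : Fin n → Bool // f x = true} = 2 ^ n

/-- A Boolean function is monotone if it is order preserving coordinatewise. -/
def monotoneBF {n : ℕ} (f : (Fin n → Bool) → Bool) : Prop :=
  ∀ x y : Fin n → Bool, (∀ i, x i ≤ y i) → f x ≤ f y

/-- The ±1 encoding of a Boolean value. -/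
noncomputable def pm (b : Bool) : ℝ := if b then 1 else -1

/-- The variance of the ±1-valued function corresponding to `f`, for a uniformly
random input. -/
noncomputable def pmVar {n : ℕ} (f : (Fin n → Bool) → Bool) : ℝ :=
  (∑ x : Fin n → Bool, pm (f x) ^ 2) / 2 ^ n
    - ((∑ x : Fin n → Bool, pm (f x)) / 2 ^ n) ^ 2

/-!
Write `δⱼ` for the probability that bit `j` is read and `Infⱼ` for the influence of bit `j` on `f`.
The theorem combines two inequalities.

* O'Donnell–Saks–Schramm–Servedio: `Var f ≤ ∑ⱼ δⱼ Infⱼ`. When the tree queries bit `j`, fix the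
  answer for the rest of its run, but let `f` see a fresh copy of the bit. This costs at most
  `Infⱼ`, since the input of `f` is independent of the past of the run. At a leaf the output of the
  tree has become independent of the input of `f`.
* O'Donnell–Servedio: `(∑ⱼ Infⱼ)² ≤ ∑ⱼ δⱼ` for monotone `f`. Monotonicity gives
  `Infⱼ = 𝔼 f(x) xⱼ`, where only the runs reading `j` contribute, so by Cauchy–Schwarz `∑ⱼ Infⱼ` is
  at most the `L²` norm of the sum of the bits read. Distinct bits are orthogonal in that sum: once
  all other bits are fixed, one of the two is read or not regardless of the value of the other.

If `δⱼ ≤ δ` for all `j`, then `Var f ≤ δ ∑ⱼ Infⱼ` and `∑ⱼ Infⱼ ≤ √(δ n)`.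
-/

open Function
open scoped BigOperators

theorem piecewise_update_eq_insert_piecewise {ι : Type*} {π : ι → Type*} [DecidableEq ι]
    {S : Finset ι} {i : ι} (hi : i ∉ S) (z x : ∀ j, π j) (b : π i) :
    S.piecewise z (update x i b) = (insert i S).piecewise (update z i b) x := by
  rw [Finset.piecewise_insert, update_self, Finset.update_piecewise_of_notMem _ _ _ hi]
  exact S.piecewise_congr (fun j hj ↦ by rw [update_of_ne (ne_of_mem_of_not_mem hj hi)])
    fun _ _ ↦ rfl

section Cube

variable {ι : Type*} [Fintype ι] [DecidableEq ι]

theorem expect_eq_half_expect_update_add (i : ι) (φ : (ι → Bool) → ℝ) :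
    𝔼 x, φ x = (𝔼 x, φ (update x i true) + 𝔼 x, φ (update x i false)) / 2 := by
  have flip_involutive : Involutive fun x : ι → Bool ↦ update x i (!x i) := fun x ↦ by simp
  have expect_flip : 𝔼 x, φ (update x i (!x i)) = 𝔼 x, φ x :=
    Fintype.expect_equiv flip_involutive.toPerm _ _ fun _ ↦ rfl
  have pair_eq (x : ι → Bool) :
      φ (update x i true) + φ (update x i false) = φ x + φ (update x i (!x i)) := by
    have hx := update_eq_self i x
    cases h : x i <;> rw [h] at hx <;> simp [hx, add_comm]
  rw [← Finset.expect_add_distrib, Finset.expect_congr rfl fun x _ ↦ pair_eq x,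
    Finset.expect_add_distrib, expect_flip, add_self_div_two]

theorem expect_mul_pm_eq_zero {i : ι} {φ : (ι → Bool) → ℝ}
    (hφ : ∀ x b, φ (update x i b) = φ x) : 𝔼 x, φ x * pm (x i) = 0 := by
  rw [expect_eq_half_expect_update_add i]
  simp [hφ, pm]

theorem abs_pm (b : Bool) : |pm b| = 1 := by cases b <;> simp [pm]

theorem pm_sq (b : Bool) : pm b ^ 2 = 1 := by cases b <;> simp [pm]

theorem monotone_pm : Monotone pm := by
  intro a b hab
  cases a <;> cases b <;> first | exact absurd hab (by decide) | norm_num [pm]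

/-- The influence of bit `i` on a real function `h` on the cube: half the expected size of the jump
of `h` across a random edge in direction `i`. For a `±1`-valued `h` this is the probability that
bit `i` is pivotal. -/
noncomputable def influence (h : (ι → Bool) → ℝ) (i : ι) : ℝ :=
  𝔼 x, |h (update x i true) - h (update x i false)| / 2

theorem influence_nonneg (h : (ι → Bool) → ℝ) (i : ι) : 0 ≤ influence h i :=
  Finset.expect_nonneg fun _ _ ↦ by positivity

theorem expect_abs_update_sub (h : (ι → Bool) → ℝ) (i : ι) (b : Bool) :
    𝔼 x, |h (update x i b) - h x| = influence h i := by
  rw [expect_eq_half_expect_update_add i, influence, ← Finset.expect_div]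
  cases b <;> simp [abs_sub_comm]

theorem expect_mul_update_le (h : (ι → Bool) → ℝ) {g : (ι → Bool) → ℝ} (hg : ∀ x, |g x| ≤ 1)
    (i : ι) (b : Bool) :
    𝔼 x, g x * h (update x i b) ≤ 𝔼 x, g x * h x + influence h i := by
  rw [← expect_abs_update_sub h i b, ← Finset.expect_add_distrib]
  refine Finset.expect_le_expect fun x _ ↦ ?_
  have : g x * (h (update x i b) - h x) ≤ |h (update x i b) - h x| :=
    calc g x * (h (update x i b) - h x)
      _ ≤ |g x| * |h (update x i b) - h x| := (le_abs_self _).trans_eq (abs_mul _ _)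
      _ ≤ |h (update x i b) - h x| := mul_le_of_le_one_left (abs_nonneg _) (hg x)
  linarith

theorem influence_eq_of_monotone {h : (ι → Bool) → ℝ} (hh : Monotone h) (i : ι) :
    influence h i = 𝔼 x, h x * pm (x i) := by
  have jump_nonneg (x : ι → Bool) : 0 ≤ h (update x i true) - h (update x i false) :=
    sub_nonneg.2 <| hh <| update_le_update_iff'.2 (Bool.false_le _)
  rw [expect_eq_half_expect_update_add i, ← Finset.expect_add_distrib, Finset.expect_div, influence]
  refine Finset.expect_congr rfl fun x _ ↦ ?_
  rw [abs_of_nonneg (jump_nonneg x)]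
  simp [pm, sub_eq_add_neg]

end Cube

namespace DTree

variable {n : ℕ} {i j : Fin n}

theorem eval_update_of_not_readsBit {t : DTree n} {x : Fin n → Bool} (hj : ¬t.readsBit x j)
    (b : Bool) : t.eval (update x j b) = t.eval x := by
  induction t with
  | leaf => rfl
  | node i t₀ t₁ ih₀ ih₁ =>
    simp only [readsBit, Bool.or_eq_true, beq_iff_eq, not_or] at hj
    cases hx : x i <;> simp_all [eval]

theorem readsBit_update_of_not_readsBit {t : DTree n} {x : Fin n → Bool} (hj : ¬t.readsBit x j)
    (b : Bool) : t.readsBit (update x j b) = t.readsBit x := by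
  induction t with
  | leaf => rfl
  | node i t₀ t₁ ih₀ ih₁ =>
    simp only [readsBit, Bool.or_eq_true, beq_iff_eq, not_or] at hj
    ext k
    cases hx : x i <;> simp_all [readsBit]

theorem readsBit_update_self (t : DTree n) (x : Fin n → Bool) (j : Fin n) (b : Bool) :
    t.readsBit (update x j b) j = t.readsBit x j := by
  by_cases hx : t.readsBit x j
  · by_contra hne
    have updated_unread : ¬t.readsBit (update x j b) j := fun h ↦ hne (h.trans hx.symm)
    have reads_eq := readsBit_update_of_not_readsBit updated_unread (x j)
    rw [update_idem, update_eq_self] at reads_eq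
    exact hne (congrFun reads_eq j).symm
  · rw [readsBit_update_of_not_readsBit hx]

theorem readsBit_update_true_eq_false_or (t : DTree n) (x : Fin n → Bool) (hij : i ≠ j) :
    t.readsBit (update x j true) i = t.readsBit (update x j false) i ∨
      t.readsBit (update x i true) j = t.readsBit (update x i false) j := by
  by_contra! ⟨reads_i_ne, reads_j_ne⟩
  -- If the value of bit `i` decides whether `j` is read, then `i` is read before `j`.
  have reads_i (b : Bool) : t.readsBit (update x j b) i := by
    by_contra unread
    refine reads_j_ne ?_
    calc t.readsBit (update x i true) j
      _ = t.readsBit (update (update x j b) i true) j := by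
        rw [update_comm hij.symm, readsBit_update_self]
      _ = t.readsBit (update (update x j b) i false) j := by
        simp only [readsBit_update_of_not_readsBit unread]
      _ = t.readsBit (update x i false) j := by
        rw [update_comm hij.symm, readsBit_update_self]
  exact reads_i_ne ((reads_i true).trans (reads_i false).symm)

/-- The probability that the tree `t` reads bit `j` of a uniformly random input. -/
noncomputable def readProb (t : DTree n) (j : Fin n) : ℝ :=
  𝔼 x, if t.readsBit x j then 1 else 0

/-- The `±1` value of bit `j` if the run of `t` on `x` reads it, and `0` otherwise. -/
noncomputable def revealed (t : DTree n) (j : Fin n) (x : Fin n → Bool) : ℝ :=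
  if t.readsBit x j then pm (x j) else 0

theorem revealed_update_self (t : DTree n) (j : Fin n) (x : Fin n → Bool) (b : Bool) :
    t.revealed j (update x j b) = if t.readsBit x j then pm b else 0 := by
  rw [revealed, readsBit_update_self, update_self]

theorem expect_revealed_mul_revealed_of_ne (t : DTree n) (hij : i ≠ j) :
    𝔼 x, t.revealed i x * t.revealed j x = 0 := by
  have revealed_i (x : Fin n → Bool) (a b : Bool) :
      t.revealed i (update (update x i a) j b) =
        if t.readsBit (update x j b) i then pm a else 0 := by
    rw [update_comm hij, revealed_update_self]
  have revealed_j (x : Fin n → Bool) (a b : Bool) :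
      t.revealed j (update (update x i a) j b) =
        if t.readsBit (update x i a) j then pm b else 0 :=
    revealed_update_self ..
  rw [expect_eq_half_expect_update_add j, ← Finset.expect_add_distrib,
    expect_eq_half_expect_update_add i, ← Finset.expect_add_distrib]
  simp only [revealed_i, revealed_j]
  rw [Finset.expect_eq_zero fun x _ ↦ ?_, zero_div, zero_div]
  rcases t.readsBit_update_true_eq_false_or x hij with h | h <;> rw [h] <;>
    simp only [pm, if_true, Bool.false_eq_true, if_false] <;> split_ifs <;> norm_num

theorem expect_revealed_sq (t : DTree n) (j : Fin n) :
    𝔼 x, t.revealed j x ^ 2 = t.readProb j := by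
  refine Finset.expect_congr rfl fun x _ ↦ ?_
  rw [revealed, ite_pow, pm_sq, zero_pow two_ne_zero]

theorem expect_sum_revealed_sq (t : DTree n) :
    𝔼 x, (∑ j, t.revealed j x) ^ 2 = ∑ j, t.readProb j := by
  simp only [sq, Finset.sum_mul_sum, Finset.expect_sum_comm]
  refine Finset.sum_congr rfl fun i _ ↦ ?_
  rw [Finset.sum_eq_single i (fun j _ hj ↦ t.expect_revealed_mul_revealed_of_ne hj.symm) (by simp)]
  simp only [← sq, expect_revealed_sq]

theorem expect_pm_eval_mul_pm (t : DTree n) (j : Fin n) :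
    𝔼 x, pm (t.eval x) * pm (x j) = 𝔼 x, pm (t.eval x) * t.revealed j x := by
  have unread_eq_zero : 𝔼 x, (if t.readsBit x j then 0 else pm (t.eval x)) * pm (x j) = 0 := by
    refine expect_mul_pm_eq_zero fun x b ↦ ?_
    rw [readsBit_update_self]
    split_ifs with hx
    · rfl
    · rw [eval_update_of_not_readsBit hx]
  rw [← sub_eq_zero, ← Finset.expect_sub_distrib, ← unread_eq_zero]
  refine Finset.expect_congr rfl fun x _ ↦ ?_
  rw [revealed]
  split_ifs <;> ring

theorem sq_sum_expect_pm_eval_mul_pm_le (t : DTree n) :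
    (∑ j, 𝔼 x, pm (t.eval x) * pm (x j)) ^ 2 ≤ ∑ j, t.readProb j :=
  calc (∑ j, 𝔼 x, pm (t.eval x) * pm (x j)) ^ 2
    _ = (𝔼 x, pm (t.eval x) * ∑ j, t.revealed j x) ^ 2 := by
      simp only [expect_pm_eval_mul_pm, Finset.mul_sum, Finset.expect_sum_comm]
    _ ≤ (𝔼 x, pm (t.eval x) ^ 2) * 𝔼 x, (∑ j, t.revealed j x) ^ 2 :=
      Finset.expect_mul_sq_le_sq_mul_sq _ _ _
    _ = ∑ j, t.readProb j := by
      simp only [pm_sq, Fintype.expect_const, one_mul, expect_sum_revealed_sq]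

theorem eval_node (c : Bool → DTree n) (i : Fin n) (x : Fin n → Bool) :
    (node i (c false) (c true)).eval x = (c (x i)).eval x := by
  cases hx : x i <;> simp [eval, hx]

theorem readsBit_node_of_ne (c : Bool → DTree n) (hij : i ≠ j) (x : Fin n → Bool) :
    (node i (c false) (c true)).readsBit x j = (c (x i)).readsBit x j := by
  cases hx : x i <;> simp [readsBit, hx, hij]

/-- The total weight, under `v`, of the bits outside `S` that the run of `t` on `x` reads. -/
noncomputable def readWeight (t : DTree n) (v : Fin n → ℝ) (S : Finset (Fin n))
    (x : Fin n → Bool) : ℝ :=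
  ∑ j ∈ Sᶜ, if t.readsBit x j then v j else 0

theorem readWeight_node_of_mem (c : Bool → DTree n) (v : Fin n → ℝ) {S : Finset (Fin n)}
    (hi : i ∈ S) (x : Fin n → Bool) :
    (node i (c false) (c true)).readWeight v S x = (c (x i)).readWeight v S x :=
  Finset.sum_congr rfl fun j hj ↦ by
    rw [readsBit_node_of_ne c (ne_of_mem_of_not_mem hi (Finset.mem_compl.1 hj))]

theorem readWeight_node_of_notMem (c : Bool → DTree n) (v : Fin n → ℝ) {S : Finset (Fin n)}
    (hi : i ∉ S) (x : Fin n → Bool) :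
    (node i (c false) (c true)).readWeight v S x =
      v i + (c (x i)).readWeight v (insert i S) x := by
  rw [readWeight, readWeight, ← Finset.add_sum_erase _ _ (Finset.mem_compl.2 hi),
    Finset.compl_insert]
  congr 1
  · simp [readsBit]
  · exact Finset.sum_congr rfl fun j hj ↦ by
      rw [readsBit_node_of_ne c (Finset.ne_of_mem_erase hj).symm]

theorem expect_readWeight_empty (t : DTree n) (v : Fin n → ℝ) :
    𝔼 x, t.readWeight v ∅ x = ∑ j, t.readProb j * v j := by
  simp [readWeight, readProb, Finset.expect_sum_comm, Finset.expect_mul, ite_mul]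

/-- The inequality of O'Donnell, Saks, Schramm and Servedio for `h` and the part of a run that is
left to the tree `t` once the bits in `S` have been read, with the values given by `z`. The tree
runs on `S.piecewise z x`, but `h` sees all of the uniformly random input `x`; rereading a bit of
`S` is free. -/
def PinnedOSSS (h : (Fin n → Bool) → ℝ) (t : DTree n) (S : Finset (Fin n)) (z : Fin n → Bool) :
    Prop :=
  𝔼 x, pm (t.eval (S.piecewise z x)) * h x - (𝔼 x, pm (t.eval (S.piecewise z x))) * 𝔼 x, h x ≤
    𝔼 x, t.readWeight (influence h) S (S.piecewise z x)

theorem pinnedOSSS_node_of_mem {h : (Fin n → Bool) → ℝ} {c : Bool → DTree n}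
    {S : Finset (Fin n)} {z : Fin n → Bool} (hi : i ∈ S) (hc : PinnedOSSS h (c (z i)) S z) :
    PinnedOSSS h (node i (c false) (c true)) S z := by
  simpa only [PinnedOSSS, eval_node, readWeight_node_of_mem c _ hi,
    Finset.piecewise_eq_of_mem _ _ _ hi] using hc

theorem pinnedOSSS_node_of_notMem {h : (Fin n → Bool) → ℝ} {c : Bool → DTree n}
    {S : Finset (Fin n)} {z : Fin n → Bool} (hi : i ∉ S)
    (hc : ∀ b, PinnedOSSS h (c b) (insert i S) (update z i b)) :
    PinnedOSSS h (node i (c false) (c true)) S z := by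
  have branch_le (b : Bool) :
      𝔼 x, pm ((c b).eval ((insert i S).piecewise (update z i b) x)) * h (update x i b) -
          (𝔼 x, pm ((c b).eval ((insert i S).piecewise (update z i b) x))) * 𝔼 x, h x ≤
        influence h i + 𝔼 x, (c b).readWeight (influence h) (insert i S)
          ((insert i S).piecewise (update z i b) x) := by
    have resample_le := expect_mul_update_le h
      (g := fun x ↦ pm ((c b).eval ((insert i S).piecewise (update z i b) x)))
      (fun _ ↦ (abs_pm _).le) i b
    have child_le := hc b
    rw [PinnedOSSS] at child_le
    linarith
  rw [PinnedOSSS, expect_eq_half_expect_update_add i fun x ↦ _ * h x,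
    expect_eq_half_expect_update_add i fun x ↦ pm (eval _ _),
    expect_eq_half_expect_update_add i fun x ↦ readWeight _ _ _ _]
  simp only [piecewise_update_eq_insert_piecewise hi, eval_node, readWeight_node_of_notMem c _ hi,
    Finset.piecewise_insert_self, update_self, Finset.expect_add_distrib, Fintype.expect_const]
  linarith [branch_le true, branch_le false]

theorem pinnedOSSS (h : (Fin n → Bool) → ℝ) (t : DTree n) (S : Finset (Fin n))
    (z : Fin n → Bool) : PinnedOSSS h t S z := by
  induction t generalizing S z with
  | leaf b => simp [PinnedOSSS, eval, readWeight, readsBit, Finset.mul_expect]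
  | node i t₀ t₁ ih₀ ih₁ =>
    have children (b : Bool) (S z) : PinnedOSSS h (bif b then t₁ else t₀) S z := by
      cases b
      exacts [ih₀ S z, ih₁ S z]
    by_cases hi : i ∈ S
    · exact pinnedOSSS_node_of_mem (c := (bif · then t₁ else t₀)) hi (children _ _ _)
    · exact pinnedOSSS_node_of_notMem (c := (bif · then t₁ else t₀)) hi fun _ ↦ children _ _ _

theorem expect_sub_le_sum_readProb_mul_influence (t : DTree n) (h : (Fin n → Bool) → ℝ) :
    𝔼 x, pm (t.eval x) * h x - (𝔼 x, pm (t.eval x)) * 𝔼 x, h x ≤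
      ∑ j, t.readProb j * influence h j := by
  simpa only [PinnedOSSS, Finset.piecewise_empty, expect_readWeight_empty] using
    pinnedOSSS h t ∅ fun _ ↦ false

end DTree

section Bounds

variable {n : ℕ}

theorem pmVar_eq_expect (f : (Fin n → Bool) → Bool) :
    pmVar f = 𝔼 x, pm (f x) * pm (f x) - (𝔼 x, pm (f x)) * 𝔼 x, pm (f x) := by
  simp [pmVar, Fintype.expect_eq_sum_div_card, sq]

theorem readProb_eq_sum (A : RandAlg n) (j : Fin n) :
    readProb A j = ∑ r, A.w r * (A.tree r).readProb j := by
  rw [readProb, Finset.sum_div]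
  refine Finset.sum_congr rfl fun r _ ↦ ?_
  rw [DTree.readProb, Finset.mul_expect, Fintype.expect_eq_sum_div_card]
  simp only [mul_ite, mul_one, mul_zero, Fintype.card_pi_const, Fintype.card_bool, Nat.cast_pow,
    Nat.cast_ofNat]

theorem le_sum_readProb_mul_of_forall_tree (A : RandAlg n) {c : ℝ} (v : Fin n → ℝ)
    (hc : ∀ r, c ≤ ∑ j, (A.tree r).readProb j * v j) : c ≤ ∑ j, readProb A j * v j :=
  calc c = ∑ r, A.w r * c := by rw [← Finset.sum_mul, A.w_sum, one_mul]
    _ ≤ ∑ r, A.w r * ∑ j, (A.tree r).readProb j * v j :=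
      Finset.sum_le_sum fun r _ ↦ mul_le_mul_of_nonneg_left (hc r) (A.w_nonneg r)
    _ = ∑ j, readProb A j * v j := by
      simp only [readProb_eq_sum, Finset.mul_sum, Finset.sum_mul, mul_assoc]
      exact Finset.sum_comm

theorem pmVar_le_sum_readProb_mul_influence {f : (Fin n → Bool) → Bool} (A : RandAlg n)
    (hcomp : ∀ r x, (A.tree r).eval x = f x) :
    pmVar f ≤ ∑ j, readProb A j * influence (fun x ↦ pm (f x)) j := by
  refine le_sum_readProb_mul_of_forall_tree A _ fun r ↦ ?_
  simpa only [pmVar_eq_expect, hcomp] using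
    (A.tree r).expect_sub_le_sum_readProb_mul_influence fun x ↦ pm (f x)

theorem sq_sum_influence_le_sum_readProb {f : (Fin n → Bool) → Bool} (hmono : monotoneBF f)
    (A : RandAlg n) (hcomp : ∀ r x, (A.tree r).eval x = f x) :
    (∑ j, influence (fun x ↦ pm (f x)) j) ^ 2 ≤ ∑ j, readProb A j := by
  have pm_comp_mono : Monotone fun x ↦ pm (f x) := fun x y hxy ↦ monotone_pm (hmono x y hxy)
  simp only [influence_eq_of_monotone pm_comp_mono]
  simpa using le_sum_readProb_mul_of_forall_tree A 1 fun r ↦ by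
    simpa [hcomp] using (A.tree r).sq_sum_expect_pm_eval_mul_pm_le

end Bounds

/-- If `f` is a monotone Boolean function on `n` bits and `A` is
a randomized decision-tree algorithm computing `f` exactly on every input, with
revealment `δ` (i.e. every bit is read with probability at most `δ`), then
`Var(f) ≤ δ^(3/2) · n^(1/2)`.  In particular a balanced monotone Boolean function
computed exactly requires `δ ≥ Ω(n^(-1/3))`. -/
theorem statement5 (n : ℕ) (f : (Fin n → Bool) → Bool) (A : RandAlg n)
    (hmono : monotoneBF f) (hcomp : ∀ r x, (A.tree r).eval x = f x)
    (δ : ℝ) (hδ0 : 0 ≤ δ) (hδ : ∀ i, readProb A i ≤ δ) :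
    pmVar f ≤ δ ^ ((3 : ℝ) / 2) * Real.sqrt n := by
  set I := ∑ j, influence (fun x ↦ pm (f x)) j
  have variance_le : pmVar f ≤ δ * I := by
    refine (pmVar_le_sum_readProb_mul_influence A hcomp).trans ?_
    rw [Finset.mul_sum]
    gcongr with j
    · exact influence_nonneg _ j
    · exact hδ j
  have total_influence_le : I ≤ √(δ * n) := by
    refine Real.le_sqrt_of_sq_le <| (sq_sum_influence_le_sum_readProb hmono A hcomp).trans ?_
    simpa [mul_comm] using Finset.sum_le_sum fun j (_ : j ∈ Finset.univ) ↦ hδ j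
  have rpow_three_halves : δ ^ ((3 : ℝ) / 2) = δ * √δ := by
    rw [Real.sqrt_eq_rpow, ← Real.rpow_one_add' hδ0 (by norm_num)]
    norm_num
  calc pmVar f ≤ δ * I := variance_le
    _ ≤ δ * √(δ * n) := by gcongr
    _ = δ ^ ((3 : ℝ) / 2) * √n := by rw [rpow_three_halves, Real.sqrt_mul hδ0, mul_assoc]
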